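/- For all real numbers x2 and u1 such that (x2 - 1)*(2375*x2^3 - 4195*x2^2 + 1960*x2 - 272) = 0 and 102*u1 - 2375*x2^3 + 6570*x2^2 - 5305*x2 + 1008 = 0, the quintuple (u0, u1, u2, x2, x3) with u0 = u2 = x2 and x3 = 1 satisfies g0 = g1 = g2 = g3 = g4 = 0. (These are naturally reductive Einstein solutions on F4(2) with u0 = u2 = x2 and x1 = x3; for x2 = 1 one recovers the bi-invariant metric u0 = u1 = u2 = x2 = x3 = 1.) -/

import Mathlib

noncomputable def g0 (u0 u1 u2 x2 x3 : ℝ) : ℝ :=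
  2*u0*u1*x2 ^ 2*x3 ^ 2 + 3*u0*u1*x2 ^ 2 + 4*u0*u1*x3 ^ 2 - 6*u1 ^ 2*x2 ^ 2*x3 ^ 2 - u1 ^ 2*x2 ^ 2 - 2*x2 ^ 2*x3 ^ 2

noncomputable def g1 (u0 u1 u2 x2 x3 : ℝ) : ℝ :=
  12*u1 ^ 2*u2*x2 ^ 2*x3 ^ 2 + 2*u1 ^ 2*u2*x2 ^ 2 - 10*u1*u2 ^ 2*x2 ^ 2*x3 ^ 2 - 5*u1*u2 ^ 2*x3 ^ 2 - 3*u1*x2 ^ 2*x3 ^ 2 + 4*u2*x2 ^ 2*x3 ^ 2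

noncomputable def g2 (u0 u1 u2 x2 x3 : ℝ) : ℝ :=
  u0*u2*x2 ^ 2*x3 + 9*u1*u2*x2 ^ 2*x3 + 50*u2 ^ 2*x2 ^ 2*x3 + 15*u2 ^ 2*x3 + 18*u2*x2 ^ 3*x3 + 6*u2*x2 ^ 3 - 108*u2*x2 ^ 2*x3 + 6*u2*x2*x3 ^ 2 - 6*u2*x2 + 9*x2 ^ 2*x3

noncomputable def g3 (u0 u1 u2 x2 x3 : ℝ) : ℝ :=
  -u0*x2 ^ 2*x3 + 4*u0*x3 - 9*u1*x2 ^ 2*x3 - 20*u2*x2 ^ 2*x3 + 20*u2*x3 - 36*x2 ^ 3*x3 - 18*x2 ^ 3 + 108*x2 ^ 2*x3 + 6*x2*x3 ^ 2 - 72*x2*x3 + 18*x2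

noncomputable def g4 (u0 u1 u2 x2 x3 : ℝ) : ℝ :=
  9*u0*x2 ^ 2 - 4*u0*x3 ^ 2 + 9*u1*x2 ^ 2 - 20*u2*x3 ^ 2 + 18*x2 ^ 3*x3 ^ 2 + 48*x2 ^ 3*x3 - 108*x2 ^ 2*x3 - 48*x2*x3 ^ 3 + 72*x2*x3 ^ 2 + 24*x2*x3

/-!
For `u0 = u2 = x2 = x`, `u1 = u` and `x1 = x3 = 1` the metric is `x` on `sp(3) = k0 + k2 + p2`,
`u` on `su(2) = k1` and `1` on the isotropy-irreducible complement `p1 + p3` of `sp(3) + su(2)` in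
`f4`. Its Ricci tensor has only three components, so the five Einstein polynomials collapse to
multiples of two: one comparing `sp(3)` with `su(2)`, the other comparing `sp(3)` with the
complement. The latter is linear in `u`; eliminating `u` between the two leaves the quartic in `x`.
-/

section

variable {R : Type*} [CommRing R]

/-- The polynomial whose vanishing says that the Ricci curvatures along `sp(3)` and `su(2)` agree,
for the metric `x` on `sp(3)`, `u` on `su(2)` and `1` on their complement in `f4`. It is the
equation `5 * x + 4 / x = 7 * u + 2 / u` with denominators cleared. -/
def ricciGapSp3Su2 (x u : R) : R :=
  5 * x ^ 2 * u + 4 * u - 7 * x * u ^ 2 - 2 * x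

/-- The polynomial whose vanishing says that the Ricci curvatures along `sp(3)` and along the
complement of `sp(3) + su(2)` agree, for the same metric. It is the equation
`25 * x + 8 / x = 36 - 3 * u` with denominators cleared. -/
def ricciGapSp3Compl (x u : R) : R :=
  25 * x ^ 2 + 3 * x * u - 36 * x + 8

theorem mul_ricciGapSp3Compl_eq (x u : R) :
    34 * ricciGapSp3Compl x u =
      (x - 1) * (2375 * x ^ 3 - 4195 * x ^ 2 + 1960 * x - 272) +
        x * (102 * u - 2375 * x ^ 3 + 6570 * x ^ 2 - 5305 * x + 1008) := by
  unfold ricciGapSp3Compl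
  ring

/-- Division with remainder by `ricciGapSp3Compl`, as a polynomial in `x * u`. -/
theorem mul_ricciGapSp3Su2_eq (x u : R) :
    9 * (x * ricciGapSp3Su2 x u) =
      (190 * x ^ 2 - 252 * x + 68 - 21 * x * u) * ricciGapSp3Compl x u -
        2 * ((x - 1) * (2375 * x ^ 3 - 4195 * x ^ 2 + 1960 * x - 272)) := by
  unfold ricciGapSp3Su2 ricciGapSp3Compl
  ring

end

section

variable (x u : ℝ)

theorem g0_eq_mul_ricciGapSp3Su2 : g0 x u x x 1 = x * ricciGapSp3Su2 x u := by
  unfold g0 ricciGapSp3Su2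
  ring

theorem g1_eq_mul_ricciGapSp3Su2 : g1 x u x x 1 = -2 * x * (x * ricciGapSp3Su2 x u) := by
  unfold g1 ricciGapSp3Su2
  ring

theorem g2_eq_mul_ricciGapSp3Compl : g2 x u x x 1 = 3 * x ^ 2 * ricciGapSp3Compl x u := by
  unfold g2 ricciGapSp3Compl
  ring

theorem g3_eq_mul_ricciGapSp3Compl : g3 x u x x 1 = -3 * x * ricciGapSp3Compl x u := by
  unfold g3 ricciGapSp3Compl
  ring

theorem g4_eq_mul_ricciGapSp3Compl : g4 x u x x 1 = 3 * x * ricciGapSp3Compl x u := by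
  unfold g4 ricciGapSp3Compl
  ring

end

theorem stmt7 :
    ∀ x2 u1 : ℝ,
      (x2 - 1) * (2375 * x2 ^ 3 - 4195 * x2 ^ 2 + 1960 * x2 - 272) = 0 →
      102 * u1 - 2375 * x2 ^ 3 + 6570 * x2 ^ 2 - 5305 * x2 + 1008 = 0 →
      (g0 x2 u1 x2 x2 1 = 0 ∧ g1 x2 u1 x2 x2 1 = 0 ∧ g2 x2 u1 x2 x2 1 = 0 ∧ g3 x2 u1 x2 x2 1 = 0 ∧ g4 x2 u1 x2 x2 1 = 0) := by
  intro x u hx hu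
  have compl_gap : ricciGapSp3Compl x u = 0 := by
    have h := mul_ricciGapSp3Compl_eq x u
    rw [hx, hu] at h
    linarith
  have su2_gap : x * ricciGapSp3Su2 x u = 0 := by
    have h := mul_ricciGapSp3Su2_eq x u
    rw [hx, compl_gap] at h
    linarith
  rw [g0_eq_mul_ricciGapSp3Su2, g1_eq_mul_ricciGapSp3Su2, g2_eq_mul_ricciGapSp3Compl,
    g3_eq_mul_ricciGapSp3Compl, g4_eq_mul_ricciGapSp3Compl, su2_gap, compl_gap]
  simp only [mul_zero, and_self]
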